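/- arXiv:1602.04146 — 7 statements merged into one kernel-verified Lean document; each statement's English description precedes it below -/
import Mathlib

section
/- Let f : ℝ → ℝ be concave and differentiable with f′(v) ≤ γ for all v, let W : ℝ → ℝ, β ∈ ℝ, and let v₁, v₂, z, z^v : ℝ → ℝ with z^v(t) = v₁(t) − v₂(t). Fix t and g ∈ ℝ, and suppose: (i) W has derivative g at z(t); (ii) z has derivative z^v(t) at t; (iii) z^v has derivative f(v₁(t)) − f(v₂(t)) − β·z^v(t) − g at t. Then the Lyapunov function L(s) := W(z(s)) + (1/2)(z^v(s))² has derivative at t bounded above by (γ − β)·(z^v(t))². In particular, if β > γ, the derivative of L at t is strictly negative whenever z^v(t) ≠ 0. -/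
/-!
By the chain rule, `L' = g * zv + zv * (f v₁ - f v₂ - β * zv - g)`, where the potential terms
cancel, leaving `zv * (f v₁ - f v₂) - β * zv ^ 2`. The mean value inequality turns the bound
`f' ≤ γ` into the one-sided Lipschitz estimate `(a - b) * (f a - f b) ≤ γ * (a - b) ^ 2`
(`sub_mul_image_sub_le`), which bounds `L'` by `(γ - β) * zv ^ 2`.
-/

/-- One-sided Lipschitz estimate for a function whose derivative is bounded above. -/
theorem sub_mul_image_sub_le {f : ℝ → ℝ} {γ : ℝ} (hdiff : Differentiable ℝ f)
    (hbound : ∀ v : ℝ, deriv f v ≤ γ) (a b : ℝ) :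
    (a - b) * (f a - f b) ≤ γ * (a - b) ^ 2 := by
  rcases le_total a b with h | h
  · have := image_sub_le_mul_sub_of_deriv_le hdiff hbound h
    nlinarith [mul_le_mul_of_nonneg_left this (sub_nonneg.2 h)]
  · have := image_sub_le_mul_sub_of_deriv_le hdiff hbound h
    nlinarith [mul_le_mul_of_nonneg_left this (sub_nonneg.2 h)]

/-- Scalar case with concave `f` whose derivative is bounded above by `γ`: the
local Lyapunov function `L = W(z) + (1/2)(z^v)²` has a derivative at `t` which
is bounded above by `(γ − β)(z^v(t))²`; in particular, if `β > γ` this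
derivative is strictly negative whenever `z^v(t) ≠ 0`. -/
theorem local_lyapunov_deriv_concave_scalar
    (f : ℝ → ℝ) (γ : ℝ)
    (hconc : ConcaveOn ℝ Set.univ f)
    (hdiff : Differentiable ℝ f)
    (hbound : ∀ v : ℝ, deriv f v ≤ γ)
    (W : ℝ → ℝ) (β : ℝ)
    (v₁ v₂ z zv : ℝ → ℝ)
    (hzv : ∀ s : ℝ, zv s = v₁ s - v₂ s)
    (t : ℝ) (g : ℝ)
    (hW : HasDerivAt W g (z t))
    (hz : HasDerivAt z (zv t) t)
    (hzv' : HasDerivAt zv (f (v₁ t) - f (v₂ t) - β * zv t - g) t) :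
    ∃ ℓ : ℝ,
      HasDerivAt (fun s => W (z s) + (1 / 2) * (zv s) ^ 2) ℓ t ∧
      ℓ ≤ (γ - β) * (zv t) ^ 2 ∧
      (β > γ → zv t ≠ 0 → ℓ < 0) := by
  have hone := sub_mul_image_sub_le hdiff hbound (v₁ t) (v₂ t)
  rw [← hzv t] at hone
  have hle : zv t * (f (v₁ t) - f (v₂ t)) - β * zv t ^ 2 ≤ (γ - β) * zv t ^ 2 := by
    linarith
  refine ⟨_, ?_, hle, fun hβ hne => hle.trans_lt ?_⟩
  · have hL := (hW.comp t hz).add ((hzv'.pow 2).const_mul (1 / 2))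
    refine hL.congr_deriv ?_
    norm_num
    ring
  · exact mul_neg_of_neg_of_pos (sub_neg.2 hβ) (by positivity)
end

section
/- Let E = ℝ^d with the Euclidean inner product. Suppose f : E → E satisfies the global Lipschitz-like condition with constant α: ⟨v₂ − v₁, f(v₂) − f(v₁)⟩ ≤ α‖v₂ − v₁‖₂² for all v₁, v₂ ∈ E. Let W : E → ℝ, β ∈ ℝ, and let v₁, v₂, z, z^v : ℝ → E be trajectories with z^v(t) = v₁(t) − v₂(t). Fix t and g ∈ E, and suppose: (i) W has gradient g at z(t); (ii) z has derivative z^v(t) at t; (iii) z^v has derivative f(v₁(t)) − f(v₂(t)) − β·z^v(t) − g at t. Then the Lyapunov function L(s) := W(z(s)) + (1/2)‖z^v(s)‖₂² has derivative at t bounded above by (α − β)·‖z^v(t)‖₂². -/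
open scoped InnerProductSpace

/-- If `f` satisfies the global one-sided Lipschitz condition with constant `α`,
then the local Lyapunov function `L = W(z) + (1/2)‖z^v‖²` has a derivative at
`t` bounded above by `(α − β)‖z^v(t)‖²`. -/
theorem local_lyapunov_deriv_le (d : ℕ)
    (f : EuclideanSpace ℝ (Fin d) → EuclideanSpace ℝ (Fin d))
    (α : ℝ)
    (hf : ∀ v₁ v₂ : EuclideanSpace ℝ (Fin d),
      ⟪v₂ - v₁, f v₂ - f v₁⟫_ℝ ≤ α * ‖v₂ - v₁‖ ^ 2)
    (W : EuclideanSpace ℝ (Fin d) → ℝ) (β : ℝ)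
    (v₁ v₂ z zv : ℝ → EuclideanSpace ℝ (Fin d))
    (hzv : ∀ s : ℝ, zv s = v₁ s - v₂ s)
    (t : ℝ) (g : EuclideanSpace ℝ (Fin d))
    (hW : HasGradientAt W g (z t))
    (hz : HasDerivAt z (zv t) t)
    (hzv' : HasDerivAt zv (f (v₁ t) - f (v₂ t) - β • zv t - g) t) :
    ∃ ℓ : ℝ,
      HasDerivAt (fun s => W (z s) + (1 / 2) * ‖zv s‖ ^ 2) ℓ t ∧
      ℓ ≤ (α - β) * ‖zv t‖ ^ 2 := by
  have h1 := hW.hasFDerivAt.comp_hasDerivAt t hz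
  have h2 := (hzv'.norm_sq).const_mul (1 / 2 : ℝ)
  refine ⟨_, h1.add h2, ?_⟩
  have h3 := hf (v₂ t) (v₁ t)
  rw [← hzv t] at h3
  -- The potential contributes `⟪g, zv⟫`, which cancels the `-⟪zv, g⟫` of the kinetic term.
  simp only [InnerProductSpace.toDual_apply_apply, inner_sub_right, real_inner_smul_right,
    real_inner_self_eq_norm_sq, real_inner_comm (zv t) g] at h3 ⊢
  linarith
end

section
/- (Forward invariance of sublevel sets.) Let E = ℝ^d with the Euclidean inner product. Suppose f : E → E satisfies the global Lipschitz-like condition with constant α: ⟨v₂ − v₁, f(v₂) − f(v₁)⟩ ≤ α‖v₂ − v₁‖₂² for all v₁, v₂ ∈ E. Let β ≥ α, let W : E → ℝ with gradient map g : E → E (W has gradient g(x) at every point x), and let v₁, v₂, z, z^v : ℝ → E satisfy for all t ≥ 0: z^v(t) = v₁(t) − v₂(t), z has derivative z^v(t) at t, and z^v has derivative f(v₁(t)) − f(v₂(t)) − β·z^v(t) − g(z(t)) at t. Then the Lyapunov function L(t) := W(z(t)) + (1/2)‖z^v(t)‖₂² is nonincreasing on [0, ∞); in particular L(t) ≤ L(0)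 for all t ≥ 0, so every sublevel set of L is forward invariant for the closed-loop error dynamics. -/
/-!
Along a trajectory the chain rule gives `L' = ⟪zv, f v₁ - f v₂⟫ - β ‖zv‖²`, since the two terms
`⟪g z, zv⟫` cancel. The one-sided Lipschitz condition bounds this by `(α - β) ‖zv‖² ≤ 0`, so the
mean value theorem makes `L` nonincreasing on `[0, ∞)`.
-/

open scoped InnerProductSpace

/-- Forward invariance of sublevel sets: if `f` is one-sided Lipschitz with
constant `α` and `β ≥ α`, then along the closed-loop error dynamics the local
Lyapunov function `L(t) = W(z(t)) + (1/2)‖z^v(t)‖²` is nonincreasing on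
`[0, ∞)`; in particular `L(t) ≤ L(0)` for all `t ≥ 0`, so every sublevel set of
`L` is forward invariant. -/
theorem lyapunov_nonincreasing (d : ℕ)
    (f : EuclideanSpace ℝ (Fin d) → EuclideanSpace ℝ (Fin d))
    (α : ℝ)
    (hf : ∀ v₁ v₂ : EuclideanSpace ℝ (Fin d),
      ⟪v₂ - v₁, f v₂ - f v₁⟫_ℝ ≤ α * ‖v₂ - v₁‖ ^ 2)
    (β : ℝ) (hβ : α ≤ β)
    (W : EuclideanSpace ℝ (Fin d) → ℝ)
    (g : EuclideanSpace ℝ (Fin d) → EuclideanSpace ℝ (Fin d))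
    (hW : ∀ x : EuclideanSpace ℝ (Fin d), HasGradientAt W (g x) x)
    (v₁ v₂ z zv : ℝ → EuclideanSpace ℝ (Fin d))
    (hzv : ∀ t : ℝ, 0 ≤ t → zv t = v₁ t - v₂ t)
    (hz : ∀ t : ℝ, 0 ≤ t → HasDerivAt z (zv t) t)
    (hzv' : ∀ t : ℝ, 0 ≤ t →
      HasDerivAt zv (f (v₁ t) - f (v₂ t) - β • zv t - g (z t)) t) :
    AntitoneOn (fun t => W (z t) + (1 / 2) * ‖zv t‖ ^ 2) (Set.Ici (0 : ℝ)) ∧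
    ∀ t : ℝ, 0 ≤ t →
      W (z t) + (1 / 2) * ‖zv t‖ ^ 2 ≤ W (z 0) + (1 / 2) * ‖zv 0‖ ^ 2 := by
  have hL : ∀ t : ℝ, 0 ≤ t → HasDerivAt (fun t => W (z t) + (1 / 2) * ‖zv t‖ ^ 2)
      (⟪zv t, f (v₁ t) - f (v₂ t)⟫_ℝ - β * ‖zv t‖ ^ 2) t := by
    intro t ht
    have h1 : HasDerivAt (fun t => W (z t)) ⟪g (z t), zv t⟫_ℝ t := by
      exact ((hW (z t)).hasFDerivAt.comp_hasDerivAt t (hz t ht)).congr_deriv (by simp)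
    have h2 := (hzv' t ht).norm_sq.const_mul (1 / 2 : ℝ)
    -- The potential term `⟪g (z t), zv t⟫` cancels against the one coming from the control law.
    refine (h1.add h2).congr_deriv ?_
    rw [inner_sub_right, inner_sub_right, inner_smul_right, real_inner_self_eq_norm_sq,
      real_inner_comm (zv t) (g (z t))]
    ring
  have hanti : AntitoneOn (fun t => W (z t) + (1 / 2) * ‖zv t‖ ^ 2) (Set.Ici (0 : ℝ)) := by
    refine antitoneOn_of_hasDerivWithinAt_nonpos (convex_Ici 0)
      (fun t ht => (hL t ht).continuousAt.continuousWithinAt)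
      (fun t ht => (hL t (interior_subset ht)).hasDerivWithinAt) ?_
    intro t ht
    have h1 := hf (v₂ t) (v₁ t)
    rw [← hzv t (interior_subset ht)] at h1
    have h2 := mul_le_mul_of_nonneg_right hβ (sq_nonneg ‖zv t‖)
    linarith
  exact ⟨hanti, fun t ht => hanti Set.self_mem_Ici ht ht⟩
end

section
/- (Collision avoidance.) Let E = ℝ^d with the Euclidean inner product. Suppose f : E → E satisfies the global Lipschitz-like condition with constant α: ⟨v₂ − v₁, f(v₂) − f(v₁)⟩ ≤ α‖v₂ − v₁‖₂² for all v₁, v₂ ∈ E. Let β ≥ α, and let W : E → ℝ be such that W(x) ≥ 0 for all x ≠ 0, W(x) → ∞ as x → 0 with x ≠ 0, and W has gradient g(x) at every x ≠ 0. Let v₁, v₂, z, z^v : ℝ → E satisfy for all t ≥ 0: z(t) ≠ 0, z^v(t) = v₁(t) − v₂(t), z has derivative z^v(t) at t, and z^v has derivative f(v₁(t)) − f(v₂(t)) − β·z^v(t) − g(z(t)) at t. Then there exists η > 0 such that ‖z(t)‖₂ ≥ η for all t ≥ 0; that is, the interspacing distance between the two agents remains uniformly bounded away from zero, with a bound determined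 by the initial condition. -/
/-!
The energy `L = W(z) + ‖zv‖² / 2` is nonincreasing along trajectories: in its derivative the
two gradient terms cancel, and the one-sided Lipschitz condition bounds the rest by
`(α - β) ‖zv‖² ≤ 0`. Hence `W (z t) ≤ L 0` for all `t ≥ 0`, and since `W` blows up at `0`, it
exceeds `L 0` on a punctured ball around `0`, which `z` therefore never meets.
-/

open Filter
open scoped InnerProductSpace

/-- Collision avoidance: under the closed-loop error dynamics with a one-sided
Lipschitz `f` (constant `α`), gain `β ≥ α` and an artificial potential `W`
which is nonnegative away from `0` and blows up to `∞` at `0`, the interspacing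
error `z(t)` remains uniformly bounded away from `0` on `[0, ∞)`. -/
theorem collision_avoidance (d : ℕ)
    (f : EuclideanSpace ℝ (Fin d) → EuclideanSpace ℝ (Fin d))
    (α : ℝ)
    (hf : ∀ v₁ v₂ : EuclideanSpace ℝ (Fin d),
      ⟪v₂ - v₁, f v₂ - f v₁⟫_ℝ ≤ α * ‖v₂ - v₁‖ ^ 2)
    (β : ℝ) (hβ : α ≤ β)
    (W : EuclideanSpace ℝ (Fin d) → ℝ)
    (hWnonneg : ∀ x : EuclideanSpace ℝ (Fin d), x ≠ 0 → 0 ≤ W x)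
    (hWblowup : Tendsto W (nhdsWithin (0 : EuclideanSpace ℝ (Fin d))
      {(0 : EuclideanSpace ℝ (Fin d))}ᶜ) atTop)
    (g : EuclideanSpace ℝ (Fin d) → EuclideanSpace ℝ (Fin d))
    (hW : ∀ x : EuclideanSpace ℝ (Fin d), x ≠ 0 → HasGradientAt W (g x) x)
    (v₁ v₂ z zv : ℝ → EuclideanSpace ℝ (Fin d))
    (hzne : ∀ t : ℝ, 0 ≤ t → z t ≠ 0)
    (hzv : ∀ t : ℝ, 0 ≤ t → zv t = v₁ t - v₂ t)
    (hz : ∀ t : ℝ, 0 ≤ t → HasDerivAt z (zv t) t)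
    (hzv' : ∀ t : ℝ, 0 ≤ t →
      HasDerivAt zv (f (v₁ t) - f (v₂ t) - β • zv t - g (z t)) t) :
    ∃ η : ℝ, 0 < η ∧ ∀ t : ℝ, 0 ≤ t → η ≤ ‖z t‖ := by
  have hderiv : ∀ t : ℝ, 0 ≤ t → HasDerivAt (fun s => W (z s) + 1 / 2 * ‖zv s‖ ^ 2)
      (⟪g (z t), zv t⟫_ℝ
        + 1 / 2 * (2 * ⟪zv t, f (v₁ t) - f (v₂ t) - β • zv t - g (z t)⟫_ℝ)) t := by
    intro t ht
    have h1 : HasDerivAt (fun s => W (z s)) ⟪g (z t), zv t⟫_ℝ t := by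
      have h := (hW _ (hzne t ht)).hasFDerivAt.comp_hasDerivAt t (hz t ht)
      rw [InnerProductSpace.toDual_apply_apply] at h
      exact h
    exact h1.add ((hzv' t ht).norm_sq.const_mul (1 / 2))
  have hanti : AntitoneOn (fun s => W (z s) + 1 / 2 * ‖zv s‖ ^ 2) (Set.Ici 0) := by
    refine antitoneOn_of_hasDerivWithinAt_nonpos (convex_Ici 0)
      (fun t ht => (hderiv t ht).continuousAt.continuousWithinAt)
      (fun t ht => (hderiv t (interior_subset ht)).hasDerivWithinAt) ?_
    intro t ht
    have ht0 : 0 ≤ t := interior_subset ht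
    have h := hf (v₂ t) (v₁ t)
    rw [← hzv t ht0] at h
    rw [inner_sub_right, inner_sub_right _ _ (β • zv t), inner_smul_right,
      real_inner_self_eq_norm_sq, real_inner_comm (zv t) (g (z t))]
    -- The gradient terms cancel, leaving at most `(α - β) * ‖zv t‖ ^ 2`.
    nlinarith [mul_le_mul_of_nonneg_right hβ (sq_nonneg ‖zv t‖)]
  -- Near `0` the potential exceeds the initial energy, so `z` cannot enter that neighbourhood.
  have hev := hWblowup.eventually_gt_atTop (W (z 0) + 1 / 2 * ‖zv 0‖ ^ 2)
  obtain ⟨η, hη, hball⟩ := Metric.mem_nhdsWithin_iff.1 hev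
  refine ⟨η, hη, fun t ht => ?_⟩
  by_contra! hlt
  have hbig : W (z 0) + 1 / 2 * ‖zv 0‖ ^ 2 < W (z t) :=
    hball ⟨by simpa using hlt, hzne t ht⟩
  have hle : W (z t) + 1 / 2 * ‖zv t‖ ^ 2 ≤ W (z 0) + 1 / 2 * ‖zv 0‖ ^ 2 :=
    hanti (Set.mem_Ici.2 le_rfl) (Set.mem_Ici.2 ht) ht
  nlinarith [sq_nonneg ‖zv t‖]
end

section
/- (Energy integral bound underlying velocity matching.) Let E = ℝ^d with the Euclidean inner product. Suppose f : E → E satisfies the global Lipschitz-like condition with constant α: ⟨v₂ − v₁, f(v₂) − f(v₁)⟩ ≤ α‖v₂ − v₁‖₂² for all v₁, v₂ ∈ E. Let β > α, let W : E → ℝ be nonnegative with gradient map g : E → E (W has gradient g(x) at every point x), and let v₁, v₂, z, z^v : ℝ → E satisfy for all t ≥ 0: z^v(t) = v₁(t) − v₂(t), z has derivative z^v(t) at t, and z^v has derivative f(v₁(t)) − f(v₂(t)) − β·z^v(t) − g(z(t)) at t, with z^v continuous. Then for every T ≥ 0, ∫₀ᵀ ‖z^v(t)‖₂² dt ≤ (W(z(0))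 + (1/2)‖z^v(0)‖₂²)/(β − α). -/
/-!
Along a trajectory, the Lyapunov function `L t = W (z t) + (1/2) ‖zv t‖²` has derivative
`⟪zv, f v₁ - f v₂⟫ - β ‖zv‖²`: the potential term `⟪g z, zv⟫` cancels against the gradient feedback.
The one-sided Lipschitz condition bounds this by `(α - β) ‖zv‖²`. As `f` is not assumed
continuous, integrability of the derivative of `L` is not immediate; the inequality form of the
fundamental theorem of calculus avoids it, comparing `L T - L 0` directly with the integral of the
continuous bound. Finally `L T ≥ 0` gives the claim.
-/

open scoped InnerProductSpace

/-- Energy integral bound underlying velocity matching: with `f` one-sided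
Lipschitz with constant `α`, gain `β > α` and nonnegative potential `W`, the
dissipation of the local Lyapunov function yields, for every `T ≥ 0`,
`∫₀ᵀ ‖z^v(t)‖² dt ≤ (W(z(0)) + (1/2)‖z^v(0)‖²)/(β − α)`. -/
theorem energy_integral_bound (d : ℕ)
    (f : EuclideanSpace ℝ (Fin d) → EuclideanSpace ℝ (Fin d))
    (α : ℝ)
    (hf : ∀ v₁ v₂ : EuclideanSpace ℝ (Fin d),
      ⟪v₂ - v₁, f v₂ - f v₁⟫_ℝ ≤ α * ‖v₂ - v₁‖ ^ 2)
    (β : ℝ) (hβ : α < β)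
    (W : EuclideanSpace ℝ (Fin d) → ℝ)
    (hWnonneg : ∀ x : EuclideanSpace ℝ (Fin d), 0 ≤ W x)
    (g : EuclideanSpace ℝ (Fin d) → EuclideanSpace ℝ (Fin d))
    (hW : ∀ x : EuclideanSpace ℝ (Fin d), HasGradientAt W (g x) x)
    (v₁ v₂ z zv : ℝ → EuclideanSpace ℝ (Fin d))
    (hzv : ∀ t : ℝ, 0 ≤ t → zv t = v₁ t - v₂ t)
    (hz : ∀ t : ℝ, 0 ≤ t → HasDerivAt z (zv t) t)
    (hzv' : ∀ t : ℝ, 0 ≤ t →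
      HasDerivAt zv (f (v₁ t) - f (v₂ t) - β • zv t - g (z t)) t)
    (hzvcont : Continuous zv) :
    ∀ T : ℝ, 0 ≤ T →
      ∫ t in (0 : ℝ)..T, ‖zv t‖ ^ 2 ≤
        (W (z 0) + (1 / 2) * ‖zv 0‖ ^ 2) / (β - α) := by
  intro T hT
  have hL : ∀ t : ℝ, 0 ≤ t → HasDerivAt (fun t => W (z t) + (1 / 2) * ‖zv t‖ ^ 2)
      (⟪zv t, f (v₁ t) - f (v₂ t)⟫_ℝ - β * ‖zv t‖ ^ 2) t := by
    intro t ht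
    have h1 := (hW (z t)).hasFDerivAt.comp_hasDerivAt t (hz t ht)
    have h2 := (hzv' t ht).norm_sq.const_mul (1 / 2 : ℝ)
    refine (h1.add h2).congr_deriv ?_
    simp only [InnerProductSpace.toDual_apply_apply, inner_sub_right, inner_smul_right,
      real_inner_self_eq_norm_sq, real_inner_comm (zv t) (g (z t))]
    ring
  have hdiss : ∀ t : ℝ, 0 ≤ t →
      ⟪zv t, f (v₁ t) - f (v₂ t)⟫_ℝ - β * ‖zv t‖ ^ 2 ≤ (α - β) * ‖zv t‖ ^ 2 := by
    intro t ht
    have h := hf (v₂ t) (v₁ t)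
    rw [← hzv t ht] at h
    linarith
  have hcont : Continuous fun t => (α - β) * ‖zv t‖ ^ 2 := by fun_prop
  have key := intervalIntegral.sub_le_integral_of_hasDeriv_right_of_le hT
    (fun t ht => (hL t ht.1).continuousAt.continuousWithinAt)
    (fun t ht => (hL t ht.1.le).hasDerivWithinAt)
    (hcont.continuousOn.integrableOn_compact isCompact_Icc)
    (fun t ht => hdiss t ht.1.le)
  rw [intervalIntegral.integral_const_mul] at key
  rw [le_div_iff₀ (sub_pos.mpr hβ)]
  have hLT : 0 ≤ W (z T) + (1 / 2) * ‖zv T‖ ^ 2 := add_nonneg (hWnonneg _) (by positivity)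
  linarith
end

section
/- (Forward invariance of formation-level sublevel sets without leader information.) Let E = ℝ^d with the Euclidean inner product and suppose f : E → E satisfies the global Lipschitz-like condition with constant α: ⟨v₂ − v₁, f(v₂) − f(v₁)⟩ ≤ α‖v₂ − v₁‖₂² for all v₁, v₂ ∈ E. Let n ≥ 1 and for each k ∈ {1, …, n} let β_k ≥ α, let W_k : E → ℝ have gradient map g_k : E → E (W_k has gradient g_k(x) at every x), and let v_0, …, v_n, z_1, …, z_n, z^v_1, …, z^v_n : ℝ → E satisfy for all t ≥ 0 and all k: z^v_k(t) = v_{k−1}(t) − v_k(t), z_k has derivative z^v_k(t) at t, and z^v_k has derivative f(v_{k−1}(t)) − f(v_k(t)) − β_k·z^v_k(t) − g_k(z_k(t)) at t. Then the formation Lyapunov function L(t) := Σ_{k=1}^n [W_k(z_k(t)) + (1/2)‖z^v_k(t)‖₂²] satisfies L(t) ≤ L(0) for all t ≥ 0, i.e., every sublevel set of L is forward invariant for the closed-loop dynamics of the entire formation. -/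
/-!
The error dynamics decouple, so each local function `Lₖ = Wₖ(zₖ) + ‖z^v_k‖² / 2` is nonincreasing
on its own. Along a trajectory the gradient terms cancel and
`L̇ₖ = ⟪z^v_k, f(v_{k-1}) - f(v_k)⟫ - βₖ ‖z^v_k‖² ≤ (α - βₖ) ‖z^v_k‖² ≤ 0`
by the one-sided Lipschitz bound. Summing over `k` gives the claim.
-/

open scoped InnerProductSpace

/-- Forward invariance of formation-level sublevel sets, without leader
information: with `f` one-sided Lipschitz (constant `α`) and gains `βₖ ≥ α`,
the formation Lyapunov function `L(t) = Σₖ [Wₖ(zₖ(t)) + (1/2)‖z^v_k(t)‖²]`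
satisfies `L(t) ≤ L(0)` for all `t ≥ 0`; hence every sublevel set of `L` is
forward invariant for the closed-loop dynamics of the entire formation.
Agents are indexed by `Fin (n+1)` (agent `0` is the leader); the error of agent
`k.succ` with respect to agent `k.castSucc` is indexed by `k : Fin n`. -/
theorem formation_lyapunov_forward_invariant (d n : ℕ) (hn : 1 ≤ n)
    (f : EuclideanSpace ℝ (Fin d) → EuclideanSpace ℝ (Fin d))
    (α : ℝ)
    (hf : ∀ v₁ v₂ : EuclideanSpace ℝ (Fin d),
      ⟪v₂ - v₁, f v₂ - f v₁⟫_ℝ ≤ α * ‖v₂ - v₁‖ ^ 2)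
    (β : Fin n → ℝ) (hβ : ∀ k : Fin n, α ≤ β k)
    (W : Fin n → EuclideanSpace ℝ (Fin d) → ℝ)
    (g : Fin n → EuclideanSpace ℝ (Fin d) → EuclideanSpace ℝ (Fin d))
    (hW : ∀ (k : Fin n) (x : EuclideanSpace ℝ (Fin d)),
      HasGradientAt (W k) (g k x) x)
    (v : Fin (n + 1) → ℝ → EuclideanSpace ℝ (Fin d))
    (z zv : Fin n → ℝ → EuclideanSpace ℝ (Fin d))
    (hzv : ∀ (k : Fin n) (t : ℝ), 0 ≤ t →
      zv k t = v k.castSucc t - v k.succ t)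
    (hz : ∀ (k : Fin n) (t : ℝ), 0 ≤ t → HasDerivAt (z k) (zv k t) t)
    (hzv' : ∀ (k : Fin n) (t : ℝ), 0 ≤ t → HasDerivAt (zv k)
      (f (v k.castSucc t) - f (v k.succ t) - β k • zv k t - g k (z k t)) t) :
    ∀ t : ℝ, 0 ≤ t →
      ∑ k : Fin n, (W k (z k t) + (1 / 2) * ‖zv k t‖ ^ 2) ≤
        ∑ k : Fin n, (W k (z k 0) + (1 / 2) * ‖zv k 0‖ ^ 2) := by
  intro t ht
  refine Finset.sum_le_sum fun k _ => ?_
  -- The derivative of `W k (z k s) + ‖zv k s‖² / 2`; the two terms in the gradient `g k` cancel.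
  have hL : ∀ s : ℝ, 0 ≤ s →
      HasDerivAt (fun s => W k (z k s) + (1 / 2) * ‖zv k s‖ ^ 2)
        (⟪zv k s, f (v k.castSucc s) - f (v k.succ s)⟫_ℝ - β k * ‖zv k s‖ ^ 2) s := by
    intro s hs
    have h₁ := (hW k (z k s)).hasFDerivAt.comp_hasDerivAt s (hz k s hs)
    have h₂ := ((hzv' k s hs).norm_sq).const_mul (1 / 2 : ℝ)
    refine (h₁.add h₂).congr_deriv ?_
    simp only [InnerProductSpace.toDual_apply_apply, inner_sub_right, inner_smul_right,
      real_inner_self_eq_norm_sq, real_inner_comm (zv k s) (g k (z k s))]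
    ring
  have hanti : AntitoneOn (fun s => W k (z k s) + (1 / 2) * ‖zv k s‖ ^ 2) (Set.Ici 0) := by
    refine antitoneOn_of_hasDerivWithinAt_nonpos (convex_Ici 0)
      (fun s hs => (hL s hs).continuousAt.continuousWithinAt)
      (fun s hs => (hL s (interior_subset hs)).hasDerivWithinAt) fun s hs => ?_
    have hs₀ : (0 : ℝ) ≤ s := interior_subset hs
    have h := hf (v k.succ s) (v k.castSucc s)
    rw [← hzv k s hs₀] at h
    nlinarith [mul_le_mul_of_nonneg_right (hβ k) (sq_nonneg ‖zv k s‖)]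
  exact hanti Set.self_mem_Ici ht ht
end

section
/- (Formation-wide collision avoidance.) Let E = ℝ^d with the Euclidean inner product and suppose f : E → E satisfies the global Lipschitz-like condition with constant α: ⟨v₂ − v₁, f(v₂) − f(v₁)⟩ ≤ α‖v₂ − v₁‖₂² for all v₁, v₂ ∈ E. Let n ≥ 1 and for each k ∈ {1, …, n} let β_k ≥ α and let W_k : E → ℝ satisfy W_k(x) ≥ 0 for x ≠ 0, W_k(x) → ∞ as x → 0 with x ≠ 0, and W_k has gradient g_k(x) at every x ≠ 0. Let v_0, …, v_n, z_1, …, z_n, z^v_1, …, z^v_n : ℝ → E satisfy for all t ≥ 0 and all k: z_k(t) ≠ 0, z^v_k(t) = v_{k−1}(t) − v_k(t), z_k has derivative z^v_k(t) at t, and z^v_k has derivative f(v_{k−1}(t)) − f(v_k(t)) − β_k·z^v_k(t) − g_k(z_k(t)) at t. Then for every k ∈ {1, …, n} there exists η_k > 0 such that ‖z_k(t)‖₂ ≥ η_k for all t ≥ 0: every pair of consecutive vehicles in the string maintains a strictly positive interspacing distance, determined by the initial conditions. -/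
/-!
The local energy `W k (z k t) + ‖zv k t‖ ^ 2 / 2` has derivative
`⟪zv, f v_{k-1} - f v_k⟫ - β k * ‖zv‖ ^ 2 ≤ (α - β k) * ‖zv‖ ^ 2 ≤ 0`, so it never exceeds
its initial value, and hence neither does `W k (z k t)`. Since `W k` blows up at `0`, it
exceeds that value on a punctured ball around `0`, which `z k t` therefore cannot enter;
the radius of the ball is the required `η`.
-/

open Filter
open scoped InnerProductSpace

/-- Formation-wide collision avoidance: with `f` one-sided Lipschitz (constant
`α`), gains `βₖ ≥ α`, and artificial potentials `Wₖ` nonnegative away from `0`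
and blowing up to `∞` at `0`, every pair of consecutive vehicles in the string
maintains a strictly positive interspacing distance: for each `k` there exists
`ηₖ > 0` with `‖zₖ(t)‖ ≥ ηₖ` for all `t ≥ 0`.  Agents are indexed by
`Fin (n+1)` (agent `0` is the leader); the error of agent `k.succ` with respect
to agent `k.castSucc` is indexed by `k : Fin n`. -/
theorem formation_collision_avoidance (d n : ℕ) (hn : 1 ≤ n)
    (f : EuclideanSpace ℝ (Fin d) → EuclideanSpace ℝ (Fin d))
    (α : ℝ)
    (hf : ∀ v₁ v₂ : EuclideanSpace ℝ (Fin d),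
      ⟪v₂ - v₁, f v₂ - f v₁⟫_ℝ ≤ α * ‖v₂ - v₁‖ ^ 2)
    (β : Fin n → ℝ) (hβ : ∀ k : Fin n, α ≤ β k)
    (W : Fin n → EuclideanSpace ℝ (Fin d) → ℝ)
    (hWnonneg : ∀ (k : Fin n) (x : EuclideanSpace ℝ (Fin d)), x ≠ 0 → 0 ≤ W k x)
    (hWblowup : ∀ k : Fin n, Tendsto (W k)
      (nhdsWithin (0 : EuclideanSpace ℝ (Fin d))
        {(0 : EuclideanSpace ℝ (Fin d))}ᶜ) atTop)
    (g : Fin n → EuclideanSpace ℝ (Fin d) → EuclideanSpace ℝ (Fin d))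
    (hW : ∀ (k : Fin n) (x : EuclideanSpace ℝ (Fin d)), x ≠ 0 →
      HasGradientAt (W k) (g k x) x)
    (v : Fin (n + 1) → ℝ → EuclideanSpace ℝ (Fin d))
    (z zv : Fin n → ℝ → EuclideanSpace ℝ (Fin d))
    (hzne : ∀ (k : Fin n) (t : ℝ), 0 ≤ t → z k t ≠ 0)
    (hzv : ∀ (k : Fin n) (t : ℝ), 0 ≤ t →
      zv k t = v k.castSucc t - v k.succ t)
    (hz : ∀ (k : Fin n) (t : ℝ), 0 ≤ t → HasDerivAt (z k) (zv k t) t)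
    (hzv' : ∀ (k : Fin n) (t : ℝ), 0 ≤ t → HasDerivAt (zv k)
      (f (v k.castSucc t) - f (v k.succ t) - β k • zv k t - g k (z k t)) t) :
    ∀ k : Fin n, ∃ η : ℝ, 0 < η ∧ ∀ t : ℝ, 0 ≤ t → η ≤ ‖z k t‖ := by
  intro k
  have hL : ∀ t : ℝ, 0 ≤ t → HasDerivAt (fun s => W k (z k s) + (1 / 2) * ‖zv k s‖ ^ 2)
      (⟪g k (z k t), zv k t⟫_ℝ + (1 / 2) * (2 * ⟪zv k t,
        f (v k.castSucc t) - f (v k.succ t) - β k • zv k t - g k (z k t)⟫_ℝ)) t := by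
    intro t ht
    have h1 := (hW k _ (hzne k t ht)).hasFDerivAt.comp_hasDerivAt t (hz k t ht)
    rw [InnerProductSpace.toDual_apply_apply] at h1
    exact h1.add ((hzv' k t ht).norm_sq.const_mul (1 / 2))
  have hanti : AntitoneOn (fun s => W k (z k s) + (1 / 2) * ‖zv k s‖ ^ 2) (Set.Ici 0) := by
    apply antitoneOn_of_deriv_nonpos (convex_Ici 0)
    · exact fun t ht => (hL t ht).continuousAt.continuousWithinAt
    · intro t ht
      exact (hL t (interior_subset ht)).differentiableAt.differentiableWithinAt
    · intro t ht
      have ht0 : 0 ≤ t := interior_subset ht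
      rw [(hL t ht0).deriv]
      have h := hf (v k.succ t) (v k.castSucc t)
      rw [← hzv k t ht0] at h
      -- The two gradient terms cancel, leaving at most `(α - β k) * ‖zv k t‖ ^ 2`.
      rw [inner_sub_right, inner_sub_right (zv k t) _ (β k • zv k t), inner_smul_right,
        real_inner_self_eq_norm_sq, real_inner_comm (zv k t) (g k (z k t))]
      nlinarith [mul_le_mul_of_nonneg_right (hβ k) (sq_nonneg ‖zv k t‖)]
  obtain ⟨η, hη, hball⟩ := Metric.mem_nhdsWithin_iff.mp
    ((hWblowup k).eventually_gt_atTop (W k (z k 0) + (1 / 2) * ‖zv k 0‖ ^ 2))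
  refine ⟨η, hη, fun t ht => ?_⟩
  by_contra! hlt
  have h1 : W k (z k 0) + (1 / 2) * ‖zv k 0‖ ^ 2 < W k (z k t) :=
    hball ⟨by simpa using hlt, hzne k t ht⟩
  have h2 : W k (z k t) + (1 / 2) * ‖zv k t‖ ^ 2 ≤ W k (z k 0) + (1 / 2) * ‖zv k 0‖ ^ 2 :=
    hanti (Set.mem_Ici.mpr le_rfl) ht ht
  nlinarith [sq_nonneg ‖zv k t‖]
end
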